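/- Let w, w' ∈ W^J. If there exist v' ∈ (W_J ·_δ w')_min and v ∈ (W_J ·_δ w)_min with v ≤ v', then for every v' ∈ (W_J ·_δ w')_min there exists v ∈ (W_J ·_δ w)_min with v ≤ v'. (That is, in the definition of w ≤_{J,δ} w', the conditions 'for some v' ∈ (W_J ·_δ w')_min' and 'for every v' ∈ (W_J ·_δ w')_min' are equivalent.) -/

import Mathlib

open CoxeterSystem

variable {B : Type*} [Finite B] {W : Type*} [Group W] {M : CoxeterMatrix B}

namespace PartialConjugation

/-- The standard parabolic subgroup `W_J` of `W`, generated by the simple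
reflections indexed by `J`. -/
def parab (cs : CoxeterSystem M W) (J : Set B) : Subgroup W :=
  Subgroup.closure (cs.simple '' J)

/-- The simple reflection `s_j` (for `j ∈ J`), viewed as an element of `W_J`. -/
def sJ (cs : CoxeterSystem M W) (J : Set B) (j : B) (hj : j ∈ J) : parab cs J :=
  ⟨cs.simple j, Subgroup.subset_closure ⟨j, hj, rfl⟩⟩

/-- `w ∈ W^J`: `w` is a minimal length representative of its left coset `w W_J`. -/
def IsMinRep (cs : CoxeterSystem M W) (J : Set B) (w : W) : Prop :=
  ∀ v ∈ parab cs J, cs.length w ≤ cs.length (w * v)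

variable (cs : CoxeterSystem M W) (J J' : Set B) (δ : parab cs J ≃* parab cs J')

/-- `δ` carries the set of simple reflections indexed by `J` onto the set of
simple reflections indexed by `J'`. -/
def MapsSimples : Prop :=
  (∀ j, ∀ hj : j ∈ J, ∃ j' ∈ J', (δ (sJ cs J j hj) : W) = cs.simple j') ∧
  (∀ j' ∈ J', ∃ j, ∃ hj : j ∈ J, (δ (sJ cs J j hj) : W) = cs.simple j')

/-- `K` is a `w`-special subset of `J`. -/
def WSpecial (w : W) (K : Set B) : Prop :=
  K ⊆ J ∧ ∀ k ∈ K, ∃ j, ∃ hjJ : j ∈ J, j ∈ K ∧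
    w * cs.simple k * w⁻¹ = (δ (sJ cs J j hjJ) : W)

/-- The set `I(J, w, δ)`: the union of all `w`-special subsets of `J`. -/
def Iset (w : W) : Set B := ⋃₀ {K | WSpecial cs J J' δ w K}

/-- The set `W_J ·_δ V = {δ(u) v u⁻¹ : u ∈ W_J, v ∈ V}`. -/
def orbSet (V : Set W) : Set W :=
  {x | ∃ u : parab cs J, ∃ v ∈ V, x = (δ u : W) * v * (u : W)⁻¹}

/-- The orbit of `x` under the `δ`-twisted partial conjugation action of `W_J`. -/
def orbitOf (x : W) : Set W := orbSet cs J J' δ {x}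

/-- The coset `w W_{I(J,w,δ)}`. -/
def coset (w : W) : Set W :=
  {x | ∃ v ∈ parab cs (Iset cs J J' δ w), x = w * v}

/-- Elementary step `v →_i v'` of `δ`-twisted conjugation: `v' = δ(s_i) v s_i`
with `i ∈ J` and `ℓ(v') ≤ ℓ(v)`. -/
def StepRel (v v' : W) : Prop :=
  ∃ i, ∃ hi : i ∈ J, v' = (δ (sJ cs J i hi) : W) * v * cs.simple i ∧
    cs.length v' ≤ cs.length v

/-- The relation `v →_{J,δ} v'`. -/
def ToRel : W → W → Prop := Relation.ReflTransGen (StepRel cs J J' δ)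

/-- The relation `v ≈_{J,δ} v'`. -/
def Approx (v v' : W) : Prop := ToRel cs J J' δ v v' ∧ ToRel cs J J' δ v' v

/-- The Bruhat order on `W`. -/
def bruhatLE (cs : CoxeterSystem M W) : W → W → Prop :=
  Relation.ReflTransGen
    (fun a b => ∃ t, cs.IsReflection t ∧ b = a * t ∧ cs.length a < cs.length b)

/-- The set of minimal length elements in the orbit of `x`. -/
def orbMin (x : W) : Set W :=
  {y ∈ orbitOf cs J J' δ x | ∀ z ∈ orbitOf cs J J' δ x, cs.length y ≤ cs.length z}

/-!
A length-preserving move `z ↦ z' = s_k z s_i` is compatible with the Bruhat order: if `v ≤ z`, then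
`v ≤ z'`, or `s_k v s_i ≤ z'` and `ℓ(s_k v s_i) ≤ ℓ(v)`. So dominating some element of
`(W_J ·_δ w)_min` passes along chains of length-preserving twisted conjugations by simple
reflections, and it suffices to link every `z ∈ (W_J ·_δ w')_min` to `w'` by such a chain.

Among the elements `a x` linked to `z`, with `a ∈ W^J` and `x ∈ W_J`, take one with `x` shortest.
Carrying the letters of `x` to the front of `a x`, minimality forces each of them to commute past
`a` at the cost of a relabelling, so `x ∈ W_K` for some `K ⊆ J` stable under this relabelling. An
element `a x` of this shape lies in the orbit of `w'` only if `a = w'`, and then `x = 1` because the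
length of `w' x` is minimal.
-/

section Generalization

variable {B : Type*} {W : Type*} [Group W] {M : CoxeterMatrix B} (cs : CoxeterSystem M W)

/-! ### Inversions and the exchange condition -/

open Classical in
/-- The action of the `i`-th generator in the permutation representation of `W` on `W × ZMod 2`:
conjugation by `s_i` on `W`, the second entry flipping exactly at `s_i`. Usually `W` is restricted
to the reflections and `ZMod 2` is the group of signs. -/
noncomputable def signedConj (i : B) : Function.End (W × ZMod 2) :=
  fun p => (cs.simple i * p.1 * cs.simple i, p.2 + if cs.simple i = p.1 then 1 else 0)

open Classical in
theorem prod_map_signedConj_apply (ω : List B) (t : W) (e : ZMod 2) :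
    (ω.map (signedConj cs)).prod (t, e) =
      (cs.wordProd ω * t * (cs.wordProd ω)⁻¹, e + (cs.rightInvSeq ω).count t) := by
  induction ω with
  | nil => simp only [List.map_nil, List.prod_nil, cs.wordProd_nil, cs.rightInvSeq_nil,
      List.count_nil, one_mul, inv_one, mul_one, Nat.cast_zero, add_zero]; rfl
  | cons i ω ih =>
    have head_eq : (cs.wordProd ω)⁻¹ * cs.simple i * cs.wordProd ω = t ↔
        cs.simple i = cs.wordProd ω * t * (cs.wordProd ω)⁻¹ := by
      rw [eq_mul_inv_iff_mul_eq, mul_assoc, inv_mul_eq_iff_eq_mul]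
    rw [List.map_cons, List.prod_cons]
    change signedConj cs i ((ω.map (signedConj cs)).prod (t, e)) = _
    rw [ih]
    simp only [signedConj, rightInvSeq, List.count_cons, beq_iff_eq, head_eq]
    ext
    · simp only [cs.wordProd_cons, mul_inv_rev, cs.inv_simple, mul_assoc]
    · push_cast
      ring

theorem wordProd_flatten_replicate (i j : B) (k : ℕ) :
    cs.wordProd (List.replicate k [i, j]).flatten = (cs.simple i * cs.simple j) ^ k := by
  simp [wordProd, List.map_flatten]

theorem inv_simple_mul_simple_pow_mul_simple (i j : B) (k : ℕ) :
    ((cs.simple i * cs.simple j) ^ k)⁻¹ * cs.simple j =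
      cs.simple j * (cs.simple i * cs.simple j) ^ k := by
  rw [← inv_pow, mul_inv_rev, cs.inv_simple, cs.inv_simple]
  exact (SemiconjBy.pow_right (mul_assoc ..).symm k).eq.symm

theorem rightInvSeq_flatten_replicate (i j : B) (k : ℕ) :
    cs.rightInvSeq (List.replicate k [i, j]).flatten =
      ((List.range (2 * k)).map
        fun n => cs.simple j * (cs.simple i * cs.simple j) ^ n).reverse := by
  induction k with
  | zero => rfl
  | succ k ih =>
    have even_entry : ((cs.simple i * cs.simple j) ^ k)⁻¹ * cs.simple j *
        (cs.simple i * cs.simple j) ^ k = cs.simple j * (cs.simple i * cs.simple j) ^ (2 * k) := by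
      rw [inv_simple_mul_simple_pow_mul_simple, mul_assoc, ← pow_add, two_mul]
    have odd_entry : (cs.simple j * (cs.simple i * cs.simple j) ^ k)⁻¹ * cs.simple i *
        (cs.simple j * (cs.simple i * cs.simple j) ^ k) =
          cs.simple j * (cs.simple i * cs.simple j) ^ (2 * k + 1) := by
      rw [mul_inv_rev, cs.inv_simple, inv_simple_mul_simple_pow_mul_simple,
        show 2 * k + 1 = k + (1 + k) by ring, pow_add, pow_add _ 1, pow_one]
      simp only [mul_assoc]
    rw [List.replicate_succ, List.flatten_cons, List.cons_append, List.singleton_append,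
      rightInvSeq, rightInvSeq, cs.wordProd_cons, wordProd_flatten_replicate, odd_entry, even_entry,
      ih, mul_add_one, List.range_succ, List.range_succ]
    simp only [List.map_append, List.map_singleton, List.reverse_append, List.reverse_singleton,
      List.cons_append, List.nil_append]

theorem isLiftable_signedConj : M.IsLiftable (signedConj cs) := by
  classical
  intro i j
  have periodic : ∀ n, cs.simple j * (cs.simple i * cs.simple j) ^ (M i j + n) =
      cs.simple j * (cs.simple i * cs.simple j) ^ n := fun n => by
    rw [pow_add, cs.simple_mul_simple_pow, one_mul]
  have word : (signedConj cs i * signedConj cs j) ^ M i j =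
      ((List.replicate (M i j) [i, j]).flatten.map (signedConj cs)).prod := by
    simp [List.map_flatten]
  funext ⟨t, e⟩
  rw [word, prod_map_signedConj_apply, wordProd_flatten_replicate, cs.simple_mul_simple_pow,
    rightInvSeq_flatten_replicate, List.count_reverse, two_mul, List.range_add, List.map_append,
    List.map_map, List.count_append]
  simp only [Function.comp_def, periodic, Nat.cast_add, CharTwo.add_self_eq_zero, one_mul, inv_one,
    mul_one, add_zero]
  rfl

/-- The permutation representation of `W` on `W × ZMod 2`. -/
noncomputable def signedConjHom : W →* Function.End (W × ZMod 2) :=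
  cs.lift ⟨signedConj cs, isLiftable_signedConj cs⟩

/-- The parity of the number of occurrences of `t` in the right inversion sequence of any word for
`w`; see `inversionParity_wordProd`. -/
noncomputable def inversionParity (w t : W) : ZMod 2 := (signedConjHom cs w (t, 0)).2

open Classical in
theorem signedConjHom_wordProd_apply (ω : List B) (t : W) (e : ZMod 2) :
    signedConjHom cs (cs.wordProd ω) (t, e) =
      (cs.wordProd ω * t * (cs.wordProd ω)⁻¹, e + (cs.rightInvSeq ω).count t) := by
  have lift_simple : signedConjHom cs ∘ cs.simple = signedConj cs :=
    funext (cs.lift_apply_simple (isLiftable_signedConj cs))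
  rw [← prod_map_signedConj_apply, wordProd, map_list_prod, List.map_map, lift_simple]

open Classical in
theorem inversionParity_wordProd (ω : List B) (t : W) :
    inversionParity cs (cs.wordProd ω) t = (cs.rightInvSeq ω).count t := by
  rw [inversionParity, signedConjHom_wordProd_apply, zero_add]

theorem inversionParity_one (t : W) : inversionParity cs 1 t = 0 := by
  simpa using inversionParity_wordProd cs [] t

open Classical in
theorem inversionParity_simple (i : B) (t : W) :
    inversionParity cs (cs.simple i) t = if cs.simple i = t then 1 else 0 := by
  simpa [rightInvSeq, List.count_cons] using inversionParity_wordProd cs [i] t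

theorem signedConjHom_apply (w t : W) (e : ZMod 2) :
    signedConjHom cs w (t, e) = (w * t * w⁻¹, e + inversionParity cs w t) := by
  obtain ⟨ω, rfl⟩ := cs.wordProd_surjective w
  rw [signedConjHom_wordProd_apply, inversionParity_wordProd]

theorem inversionParity_mul (x y t : W) :
    inversionParity cs (x * y) t =
      inversionParity cs y t + inversionParity cs x (y * t * y⁻¹) := by
  have h : signedConjHom cs (x * y) (t, 0) = signedConjHom cs x (signedConjHom cs y (t, 0)) := by
    rw [map_mul]
    rfl
  simpa only [signedConjHom_apply, zero_add] using congrArg Prod.snd h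

variable {cs}

theorem inversionParity_self {t : W} (ht : cs.IsReflection t) : inversionParity cs t t = 1 := by
  obtain ⟨w, i, rfl⟩ := ht
  have conj_back : w⁻¹ * (w * cs.simple i * w⁻¹) * w⁻¹⁻¹ = cs.simple i := by group
  have cancel := inversionParity_mul cs w w⁻¹ (w * cs.simple i * w⁻¹)
  rw [mul_inv_cancel, inversionParity_one, conj_back] at cancel
  rw [inversionParity_mul, inversionParity_mul, conj_back, inversionParity_simple, if_pos rfl,
    cs.inv_simple, cs.simple_mul_simple_cancel_right]
  linear_combination -cancel

theorem mem_rightInvSeq_of_inversionParity_ne_zero {ω : List B} {t : W}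
    (h : inversionParity cs (cs.wordProd ω) t ≠ 0) : t ∈ cs.rightInvSeq ω := by
  classical
  contrapose! h
  rw [inversionParity_wordProd, List.count_eq_zero_of_not_mem h, Nat.cast_zero]

theorem isRightInversion_of_inversionParity_ne_zero {w t : W} (h : inversionParity cs w t ≠ 0) :
    cs.IsRightInversion w t := by
  obtain ⟨ω, hω, rfl⟩ := cs.exists_isReduced w
  exact cs.isRightInversion_of_mem_rightInvSeq hω (mem_rightInvSeq_of_inversionParity_ne_zero h)

theorem isRightInversion_iff_inversionParity_ne_zero {w t : W} (ht : cs.IsReflection t) :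
    cs.IsRightInversion w t ↔ inversionParity cs w t ≠ 0 := by
  refine ⟨fun hw hzero => ?_, isRightInversion_of_inversionParity_ne_zero⟩
  have parity_mul : inversionParity cs (w * t) t ≠ 0 := by
    rw [inversionParity_mul, inversionParity_self ht, ht.inv, mul_assoc, ht.mul_self, mul_one,
      hzero, add_zero]
    exact one_ne_zero
  exact ht.isRightInversion_mul_left_iff.1
    (isRightInversion_of_inversionParity_ne_zero parity_mul) hw

theorem exists_wordProd_mul_eq_wordProd_eraseIdx {ω : List B} {t : W}
    (h : cs.IsRightInversion (cs.wordProd ω) t) :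
    ∃ j < ω.length, cs.wordProd ω * t = cs.wordProd (ω.eraseIdx j) := by
  have mem := mem_rightInvSeq_of_inversionParity_ne_zero
    ((isRightInversion_iff_inversionParity_ne_zero h.1).1 h)
  obtain ⟨j, hj, rfl⟩ := List.mem_iff_getElem.1 mem
  refine ⟨j, by rwa [cs.length_rightInvSeq] at hj, ?_⟩
  rw [← List.getD_eq_getElem _ 1 hj, cs.wordProd_mul_getD_rightInvSeq]

theorem isRightInversion_mul_simple_iff (x : W) {t : W} {i : B} (hne : t ≠ cs.simple i) :
    cs.IsRightInversion (x * cs.simple i) (cs.simple i * t * cs.simple i) ↔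
      cs.IsRightInversion x t := by
  have conj_ne : cs.simple i ≠ cs.simple i * t * cs.simple i := fun h => hne <| by
    simpa [mul_assoc] using congrArg (cs.simple i * · * cs.simple i) h.symm
  have conj_iff : cs.IsReflection (cs.simple i * t * cs.simple i) ↔ cs.IsReflection t := by
    simpa only [cs.inv_simple] using cs.isReflection_conj_iff (cs.simple i) t
  by_cases ht : cs.IsReflection t
  · rw [isRightInversion_iff_inversionParity_ne_zero (conj_iff.2 ht),
      isRightInversion_iff_inversionParity_ne_zero ht, inversionParity_mul, inversionParity_simple,
      if_neg conj_ne, zero_add, cs.inv_simple]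
    simp only [mul_assoc, cs.simple_mul_simple_cancel_left, cs.simple_mul_simple_self, mul_one]
  · exact iff_of_false (fun h => ht (conj_iff.1 h.1)) fun h => ht h.1

theorem length_mul_simple_lt_length_mul_mul_simple {x t : W} {i : B} (ht : cs.IsReflection t)
    (hne : t ≠ cs.simple i) (h : cs.length x < cs.length (x * t)) :
    cs.length (x * cs.simple i) < cs.length (x * t * cs.simple i) := by
  have conj : cs.IsReflection (cs.simple i * t * cs.simple i) := by
    simpa only [cs.inv_simple] using ht.conj (cs.simple i)
  have not_inversion : ¬cs.IsRightInversion (x * cs.simple i) (cs.simple i * t * cs.simple i) :=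
    fun hinv => h.not_gt ((isRightInversion_mul_simple_iff x hne).1 hinv).2
  have product : x * cs.simple i * (cs.simple i * t * cs.simple i) = x * t * cs.simple i := by
    simp only [mul_assoc, cs.simple_mul_simple_cancel_left]
  rw [← product]
  exact lt_of_le_of_ne (not_lt.1 fun hlt => not_inversion ⟨conj, hlt⟩)
    (conj.length_mul_left_ne _).symm

/-- If `i` becomes a right descent after left multiplication by `s_k`, the exchange condition can
only delete the new letter. -/
theorem simple_mul_eq_mul_simple {x : W} {k i : B} (hx : ¬cs.IsRightDescent x i)
    (hkx : cs.IsRightDescent (cs.simple k * x) i) : cs.simple k * x = x * cs.simple i := by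
  have ht : cs.IsReflection (x⁻¹ * cs.simple k * x) := by
    simpa only [inv_inv] using (cs.isReflection_simple k).conj x⁻¹
  have mul_t : x * (x⁻¹ * cs.simple k * x) = cs.simple k * x := by group
  by_contra hne
  have hti : x⁻¹ * cs.simple k * x ≠ cs.simple i := fun h => hne (by rw [← mul_t, h])
  have ascent := length_mul_simple_lt_length_mul_mul_simple (x := x) ht hti
  rw [mul_t] at ascent
  rw [cs.not_isRightDescent_iff] at hx
  rw [cs.isRightDescent_iff] at hkx
  have length_kxi := cs.length_simple_mul (x * cs.simple i) k
  rw [← mul_assoc] at length_kxi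
  have length_kx := cs.length_simple_mul x k
  omega

/-! ### Bruhat order -/

theorem bruhatLE_mul_simple {x : W} {i : B} (hx : ¬cs.IsRightDescent x i) :
    bruhatLE cs x (x * cs.simple i) :=
  .single ⟨_, cs.isReflection_simple i, rfl, by rw [cs.not_isRightDescent_iff.1 hx]; omega⟩

theorem bruhatLE.trans {x y z : W} (hxy : bruhatLE cs x y) (hyz : bruhatLE cs y z) :
    bruhatLE cs x z :=
  Relation.ReflTransGen.trans hxy hyz

theorem bruhatLE.inv {x y : W} (h : bruhatLE cs x y) : bruhatLE cs x⁻¹ y⁻¹ :=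
  h.lift _ fun a b => by
    rintro ⟨t, ht, rfl, hlt⟩
    refine ⟨a * t * a⁻¹, ht.conj a, ?_, by simpa only [cs.length_inv] using hlt⟩
    rw [mul_inv_rev, ht.inv]
    group

theorem bruhatLE_simple_mul {x : W} {i : B} (hx : ¬cs.IsLeftDescent x i) :
    bruhatLE cs x (cs.simple i * x) := by
  simpa only [mul_inv_rev, inv_inv, cs.inv_simple] using
    (bruhatLE_mul_simple (cs.isRightDescent_inv_iff.not.2 hx)).inv

theorem bruhatLE_mul_simple_mul_simple_of_ne {x t : W} {i : B} (ht : cs.IsReflection t)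
    (hlt : cs.length x < cs.length (x * t)) (hne : t ≠ cs.simple i) :
    bruhatLE cs (x * cs.simple i) (x * t * cs.simple i) := by
  refine .single ⟨cs.simple i * t * cs.simple i, ?_, ?_,
    length_mul_simple_lt_length_mul_mul_simple ht hne hlt⟩
  · simpa only [cs.inv_simple] using ht.conj (cs.simple i)
  · simp only [mul_assoc, cs.simple_mul_simple_cancel_left]

theorem bruhatLE.le_mul_simple {x y : W} {i : B} (h : bruhatLE cs x y)
    (hx : ¬cs.IsRightDescent x i) : bruhatLE cs x (y * cs.simple i) := by
  induction h with
  | refl => exact bruhatLE_mul_simple hx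
  | @tail b c hxb hbc ih =>
    obtain ⟨t, ht, rfl, hlt⟩ := hbc
    obtain rfl | hti := eq_or_ne t (cs.simple i)
    · rwa [cs.simple_mul_simple_cancel_right]
    · exact ih.trans (bruhatLE_mul_simple_mul_simple_of_ne ht hlt hti)

theorem bruhatLE.mul_simple_of_isRightDescent {x y : W} {i : B} (h : bruhatLE cs x y)
    (hx : cs.IsRightDescent x i) : bruhatLE cs (x * cs.simple i) (y * cs.simple i) := by
  have hxi := cs.isRightDescent_iff_not_isRightDescent_mul.1 hx
  have xi_le_x := bruhatLE_mul_simple hxi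
  rw [cs.simple_mul_simple_cancel_right] at xi_le_x
  exact (bruhatLE.trans xi_le_x h).le_mul_simple hxi

theorem bruhatLE.mul_simple_of_not_isRightDescent {x y : W} {i : B} (h : bruhatLE cs x y)
    (hy : ¬cs.IsRightDescent y i) : bruhatLE cs (x * cs.simple i) (y * cs.simple i) := by
  induction h using Relation.ReflTransGen.head_induction_on with
  | refl => exact .refl
  | @head a b hab hby ih =>
    obtain ⟨t, ht, rfl, hlt⟩ := hab
    obtain rfl | hti := eq_or_ne t (cs.simple i)
    · exact bruhatLE.trans hby (bruhatLE_mul_simple hy)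
    · exact (bruhatLE_mul_simple_mul_simple_of_ne ht hlt hti).trans ih

theorem bruhatLE.simple_mul_of_not_isLeftDescent {x y : W} {i : B} (h : bruhatLE cs x y)
    (hy : ¬cs.IsLeftDescent y i) : bruhatLE cs (cs.simple i * x) (cs.simple i * y) := by
  simpa only [mul_inv_rev, inv_inv, cs.inv_simple] using
    (h.inv.mul_simple_of_not_isRightDescent (cs.isRightDescent_inv_iff.not.2 hy)).inv

/-- A move `v ↦ s_k v s_i` compatible with `z ↦ s_k z s_i` is found by following `z ↦ z s_i`,
which decreases the length, and then `z s_i ↦ s_k z s_i`, which increases it. -/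
theorem bruhatLE.simple_mul_mul_simple_of_isRightDescent {v z : W} {k i : B}
    (h : bruhatLE cs v z) (hlen : cs.length (cs.simple k * z * cs.simple i) = cs.length z)
    (hz : cs.IsRightDescent z i) :
    bruhatLE cs v (cs.simple k * z * cs.simple i) ∨
      bruhatLE cs (cs.simple k * v * cs.simple i) (cs.simple k * z * cs.simple i) ∧
        cs.length (cs.simple k * v * cs.simple i) ≤ cs.length v := by
  rw [mul_assoc] at hlen ⊢
  have hzi : ¬cs.IsLeftDescent (z * cs.simple i) k := by
    have := cs.isRightDescent_iff.1 hz
    rw [cs.not_isLeftDescent_iff]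
    omega
  by_cases hv : cs.IsRightDescent v i
  · refine .inr ⟨?_, ?_⟩
    · rw [mul_assoc]
      exact (h.mul_simple_of_isRightDescent hv).simple_mul_of_not_isLeftDescent hzi
    · have length_vi := cs.isRightDescent_iff.1 hv
      have length_kvi := cs.length_simple_mul (v * cs.simple i) k
      rw [← mul_assoc] at length_kvi
      omega
  · exact .inl ((h.le_mul_simple hv).trans (bruhatLE_simple_mul hzi))

theorem bruhatLE.simple_mul_mul_simple {v z : W} {k i : B} (h : bruhatLE cs v z)
    (hlen : cs.length (cs.simple k * z * cs.simple i) = cs.length z) :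
    bruhatLE cs v (cs.simple k * z * cs.simple i) ∨
      bruhatLE cs (cs.simple k * v * cs.simple i) (cs.simple k * z * cs.simple i) ∧
        cs.length (cs.simple k * v * cs.simple i) ≤ cs.length v := by
  have inv_move (x : W) : cs.simple i * x⁻¹ * cs.simple k =
      (cs.simple k * x * cs.simple i)⁻¹ := by
    simp only [mul_inv_rev, cs.inv_simple, mul_assoc]
  by_cases hzi : cs.IsRightDescent z i
  · exact h.simple_mul_mul_simple_of_isRightDescent hlen hzi
  by_cases hzk : cs.IsLeftDescent z k
  · have inverse_move := h.inv.simple_mul_mul_simple_of_isRightDescent (k := i) (i := k)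
      (by rwa [inv_move, cs.length_inv, cs.length_inv]) (cs.isRightDescent_inv_iff.2 hzk)
    rw [inv_move, inv_move, cs.length_inv, cs.length_inv] at inverse_move
    exact inverse_move.imp (fun h => by simpa only [inv_inv] using h.inv)
      (And.imp_left fun h => by simpa only [inv_inv] using h.inv)
  · have hkzi : cs.IsRightDescent (cs.simple k * z) i := by
      rw [cs.isRightDescent_iff, hlen, cs.not_isLeftDescent_iff.1 hzk]
    have fixed : cs.simple k * z * cs.simple i = z := by
      rw [simple_mul_eq_mul_simple hzi hkzi, cs.simple_mul_simple_cancel_right]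
    exact .inl (by rwa [fixed])

/-! ### Parabolic subgroups -/

theorem exists_sublist_isReduced (ω : List B) :
    ∃ ω', List.Sublist ω' ω ∧ cs.IsReduced ω' ∧ cs.wordProd ω' = cs.wordProd ω := by
  induction ω using List.reverseRecOn with
  | nil => exact ⟨[], .refl _, by simp [CoxeterSystem.IsReduced], rfl⟩
  | append_singleton ω i ih =>
    obtain ⟨ω', hsub, hred, hprod⟩ := ih
    have prod_mul : cs.wordProd ω' * cs.simple i = cs.wordProd (ω ++ [i]) := by
      rw [hprod, cs.wordProd_append, cs.wordProd_singleton]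
    by_cases hi : cs.IsRightDescent (cs.wordProd ω') i
    · obtain ⟨j, hj, herase⟩ := exists_wordProd_mul_eq_wordProd_eraseIdx
        ((cs.isRightInversion_simple_iff_isRightDescent _ i).2 hi)
      refine ⟨ω'.eraseIdx j, (List.eraseIdx_sublist ω' j).trans
        (hsub.trans (List.sublist_append_left ω [i])), ?_, herase.symm.trans prod_mul⟩
      have length_erase := List.length_eraseIdx_add_one hj
      have descent := cs.isRightDescent_iff.1 hi
      rw [herase, hred.eq] at descent
      rw [CoxeterSystem.IsReduced]
      omega
    · have prod_append : cs.wordProd (ω' ++ [i]) = cs.wordProd ω' * cs.simple i := by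
        rw [cs.wordProd_append, cs.wordProd_singleton]
      refine ⟨ω' ++ [i], hsub.append_right [i], ?_, prod_append.trans prod_mul⟩
      rw [CoxeterSystem.IsReduced, prod_append, cs.not_isRightDescent_iff.1 hi, hred.eq,
        List.length_append, List.length_singleton]

theorem wordProd_mem_parab {J : Set B} {ω : List B} (hω : ∀ i ∈ ω, i ∈ J) :
    cs.wordProd ω ∈ parab cs J :=
  list_prod_mem fun _ hx => by
    obtain ⟨i, hi, rfl⟩ := List.mem_map.1 hx
    exact (sJ cs J i (hω i hi)).2

theorem exists_wordProd_eq_of_mem_parab {J : Set B} {x : W} (hx : x ∈ parab cs J) :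
    ∃ ω : List B, (∀ i ∈ ω, i ∈ J) ∧ cs.wordProd ω = x := by
  induction hx using Subgroup.closure_induction with
  | mem x hx =>
    obtain ⟨i, hi, rfl⟩ := hx
    exact ⟨[i], by simpa using hi, cs.wordProd_singleton i⟩
  | one => exact ⟨[], by simp, cs.wordProd_nil⟩
  | mul x y _ _ hx hy =>
    obtain ⟨ω, hω, rfl⟩ := hx
    obtain ⟨ω', hω', rfl⟩ := hy
    exact ⟨ω ++ ω', by simpa [or_imp, forall_and] using ⟨hω, hω'⟩, cs.wordProd_append ω ω'⟩
  | inv x _ hx =>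
    obtain ⟨ω, hω, rfl⟩ := hx
    exact ⟨ω.reverse, by simpa using hω, cs.wordProd_reverse ω⟩

theorem exists_isReduced_of_mem_parab {J : Set B} {x : W} (hx : x ∈ parab cs J) :
    ∃ ω : List B, (∀ i ∈ ω, i ∈ J) ∧ cs.IsReduced ω ∧ cs.wordProd ω = x := by
  obtain ⟨ω, hω, rfl⟩ := exists_wordProd_eq_of_mem_parab hx
  obtain ⟨ω', hsub, hred, hprod⟩ := exists_sublist_isReduced (cs := cs) ω
  exact ⟨ω', fun i hi => hω i (hsub.subset hi), hred, hprod⟩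

variable {J : Set B}

theorem IsMinRep.length_mul {a x : W} (ha : IsMinRep cs J a) (hx : x ∈ parab cs J) :
    cs.length (a * x) = cs.length a + cs.length x := by
  obtain ⟨α, hα, rfl⟩ := cs.exists_isReduced a
  obtain ⟨ω, hω, rfl⟩ := exists_wordProd_eq_of_mem_parab hx
  obtain ⟨_, hsub, hred, hprod⟩ := exists_sublist_isReduced (cs := cs) (α ++ ω)
  obtain ⟨α', ω', rfl, hα', hω'⟩ := List.sublist_append_iff.1 hsub
  rw [cs.wordProd_append, cs.wordProd_append] at hprod
  have α'_eq : α' = α := by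
    refine hα'.eq_of_length_le ?_
    have prod_α' : cs.wordProd α' = cs.wordProd α * (cs.wordProd ω * (cs.wordProd ω')⁻¹) := by
      rw [← mul_assoc, ← hprod, mul_inv_cancel_right]
    have coset_min := ha _ (mul_mem hx (inv_mem
      (wordProd_mem_parab fun i hi => hω i (hω'.subset hi))))
    rw [← prod_α', hα.eq] at coset_min
    exact coset_min.trans (cs.length_wordProd_le α')
  subst α'_eq
  have length_prod := hred.eq
  rw [cs.wordProd_append, hprod, List.length_append] at length_prod
  have prod_ω' : cs.wordProd ω' = cs.wordProd ω := mul_left_cancel hprod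
  have length_ω' := prod_ω' ▸ cs.length_wordProd_le ω'
  have length_mul_le := cs.length_mul_le (cs.wordProd α') (cs.wordProd ω)
  rw [hα.eq] at length_mul_le ⊢
  omega

variable (cs J) in
theorem exists_isMinRep_mul (v : W) :
    ∃ a, IsMinRep cs J a ∧ ∃ x ∈ parab cs J, v = a * x := by
  obtain ⟨u, hu, hmin⟩ := (measure fun u => cs.length (v * u)).wf.has_min (parab cs J : Set W)
    ⟨1, one_mem _⟩
  refine ⟨v * u, fun y hy => ?_, u⁻¹, inv_mem hu, (mul_inv_cancel_right v u).symm⟩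
  rw [mul_assoc]
  exact not_lt.1 (hmin _ (mul_mem hu hy))

theorem IsMinRep.eq_of_mul_eq_mul {a b x y : W} (ha : IsMinRep cs J a) (hb : IsMinRep cs J b)
    (hx : x ∈ parab cs J) (hy : y ∈ parab cs J) (h : a * x = b * y) : a = b := by
  have a_eq : a = b * (y * x⁻¹) := by rw [← mul_assoc, ← h, mul_inv_cancel_right]
  have hyx := mul_mem hy (inv_mem hx)
  have b_eq : b = a * (y * x⁻¹)⁻¹ := by rw [a_eq, mul_inv_cancel_right]
  have length_a := hb.length_mul hyx
  have length_b := ha (y * x⁻¹)⁻¹ (inv_mem hyx)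
  rw [← a_eq] at length_a
  rw [← b_eq] at length_b
  rw [a_eq, cs.length_eq_zero_iff.1 (show cs.length (y * x⁻¹) = 0 by omega), mul_one]

theorem IsMinRep.not_isRightDescent {a : W} {j : B} (ha : IsMinRep cs J a) (hj : j ∈ J) :
    ¬cs.IsRightDescent a j :=
  not_lt.2 (ha _ (sJ cs J j hj).2)

theorem isMinRep_of_forall_not_isRightDescent {a : W} (ha : ∀ j ∈ J, ¬cs.IsRightDescent a j) :
    IsMinRep cs J a := by
  obtain ⟨b, hb, x, hx, rfl⟩ := exists_isMinRep_mul cs J a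
  obtain ⟨ω, hω, hred, rfl⟩ := exists_isReduced_of_mem_parab hx
  obtain rfl | ⟨ω, j, rfl⟩ := ω.eq_nil_or_concat'
  · rwa [cs.wordProd_nil, mul_one]
  have hj : j ∈ J := hω j (by simp)
  refine absurd ?_ (ha j hj)
  have hωj := wordProd_mem_parab (cs := cs) fun i hi => hω i (List.mem_append_left [j] hi)
  have length_whole := hred.eq
  have length_init := cs.length_wordProd_le ω
  rw [IsRightDescent, hb.length_mul hx]
  rw [List.length_append, List.length_singleton] at length_whole
  rw [cs.wordProd_append, cs.wordProd_singleton, mul_assoc b, cs.simple_mul_simple_cancel_right,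
    hb.length_mul hωj, ← cs.wordProd_singleton, ← cs.wordProd_append]
  omega

/-- Deodhar's lemma. -/
theorem IsMinRep.simple_mul {a : W} (ha : IsMinRep cs J a) (i : B) :
    IsMinRep cs J (cs.simple i * a) ∨ ∃ j ∈ J, cs.simple i * a = a * cs.simple j := by
  by_cases h : ∀ j ∈ J, ¬cs.IsRightDescent (cs.simple i * a) j
  · exact .inl (isMinRep_of_forall_not_isRightDescent h)
  · push Not at h
    obtain ⟨j, hj, hdesc⟩ := h
    exact .inr ⟨j, hj, simple_mul_eq_mul_simple (ha.not_isRightDescent hj) hdesc⟩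

theorem wordProd_mul_eq_mul_wordProd {a : W} {ω ω' : List B}
    (h : List.Forall₂ (fun i j => cs.simple i * a = a * cs.simple j) ω ω') :
    cs.wordProd ω * a = a * cs.wordProd ω' := by
  induction h with
  | nil => rw [cs.wordProd_nil, one_mul, mul_one]
  | cons hij _ ih => rw [cs.wordProd_cons, cs.wordProd_cons, mul_assoc, ih, ← mul_assoc, hij,
      mul_assoc]

theorem IsMinRep.forall₂_or_exists_length_lt {a : W} (ha : IsMinRep cs J a) {ω : List B}
    (hω : cs.length (cs.wordProd ω * a) = ω.length + cs.length a) :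
    (∃ ω', List.Forall₂ (fun i j => cs.simple i * a = a * cs.simple j) ω ω' ∧ ∀ j ∈ ω', j ∈ J) ∨
      ∃ b, IsMinRep cs J b ∧ cs.length a < cs.length b ∧
        ∃ z ∈ parab cs J, cs.wordProd ω * a = b * z := by
  induction ω with
  | nil => exact .inl ⟨[], .nil, by simp⟩
  | cons i ω ih =>
    rw [cs.wordProd_cons, mul_assoc, List.length_cons] at hω
    rw [cs.wordProd_cons, mul_assoc]
    have length_tail : cs.length (cs.wordProd ω * a) = ω.length + cs.length a := by
      have := cs.length_mul_le (cs.wordProd ω) a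
      have := cs.length_wordProd_le ω
      have := cs.length_simple_mul (cs.wordProd ω * a) i
      omega
    obtain ⟨ω', hcross, hω'⟩ | ⟨b, hb, hab, z, hz, hprod⟩ := ih length_tail
    · obtain hia | ⟨j, hj, hij⟩ := ha.simple_mul i
      · have hz := wordProd_mem_parab (cs := cs) hω'
        have hprod := wordProd_mul_eq_mul_wordProd hcross
        refine .inr ⟨_, hia, ?_, _, hz, by rw [hprod, mul_assoc]⟩
        have := cs.length_wordProd_le ω'
        have := hcross.length_eq
        rw [hprod, ← mul_assoc, hia.length_mul hz] at hω
        omega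
      · exact .inl ⟨j :: ω', .cons hij hcross, by simpa using ⟨hj, hω'⟩⟩
    · rw [hprod] at hω length_tail ⊢
      obtain hib | ⟨j, hj, hij⟩ := hb.simple_mul i
      · refine .inr ⟨_, hib, ?_, z, hz, (mul_assoc ..).symm⟩
        rw [← mul_assoc, hib.length_mul hz] at hω
        rw [hb.length_mul hz] at length_tail
        omega
      · exact .inr ⟨b, hb, hab, _, mul_mem (sJ cs J j hj).2 hz, by
          rw [← mul_assoc, hij, mul_assoc]; rfl⟩

/-! ### Twisted orbits -/

/-- The orbit of `x` under the twisted conjugation `u · x = φ(u) x u⁻¹` of `W_J` on `W`. -/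
def twistedOrbit (φ : parab cs J →* W) (x : W) : Set W :=
  {y | ∃ u : parab cs J, y = φ u * x * (u : W)⁻¹}

/-- The set of elements of minimal length in the twisted orbit of `x`. -/
def minTwistedOrbit (φ : parab cs J →* W) (x : W) : Set W :=
  {y ∈ twistedOrbit φ x | ∀ z ∈ twistedOrbit φ x, cs.length y ≤ cs.length z}

/-- `φ` carries `s_j` to `s_{f j}` for `j ∈ J`; the values of `f` outside `J` are irrelevant. -/
def CarriesSimples (φ : parab cs J →* W) (f : B → B) : Prop :=
  ∀ j, ∀ hj : j ∈ J, φ (sJ cs J j hj) = cs.simple (f j)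

/-- An elementary length-preserving twisted conjugation, by one simple reflection of `W_J`. -/
def TwistedShift (φ : parab cs J →* W) (v v' : W) : Prop :=
  ∃ j, ∃ hj : j ∈ J, v' = φ (sJ cs J j hj) * v * cs.simple j ∧ cs.length v' = cs.length v

/-- `v` and `v'` are linked by a chain of length-preserving elementary twisted conjugations. -/
def ShiftEquiv (φ : parab cs J →* W) : W → W → Prop :=
  Relation.ReflTransGen (TwistedShift φ)

variable {φ : parab cs J →* W} {f : B → B} {v v' v'' w x y : W}

theorem self_mem_twistedOrbit (x : W) : x ∈ twistedOrbit φ x := ⟨1, by simp⟩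

theorem mul_mul_inv_mem_twistedOrbit (hy : y ∈ twistedOrbit φ x) (u : parab cs J) :
    φ u * y * (u : W)⁻¹ ∈ twistedOrbit φ x := by
  obtain ⟨u', rfl⟩ := hy
  exact ⟨u * u', by simp [mul_assoc]⟩

theorem mem_minTwistedOrbit_of_length_le (hv : v ∈ minTwistedOrbit φ w)
    (hv' : v' ∈ twistedOrbit φ w) (hle : cs.length v' ≤ cs.length v) :
    v' ∈ minTwistedOrbit φ w :=
  ⟨hv', fun z hz => hle.trans (hv.2 z hz)⟩

theorem TwistedShift.mem_twistedOrbit (h : TwistedShift φ v v') (hv : v ∈ twistedOrbit φ w) :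
    v' ∈ twistedOrbit φ w := by
  obtain ⟨j, hj, rfl, -⟩ := h
  simpa only [sJ, cs.inv_simple] using mul_mul_inv_mem_twistedOrbit hv (sJ cs J j hj)

theorem TwistedShift.symm (h : TwistedShift φ v v') : TwistedShift φ v' v := by
  obtain ⟨j, hj, rfl, hlen⟩ := h
  have map_sq : φ (sJ cs J j hj) * φ (sJ cs J j hj) = 1 := by
    rw [← map_mul, show sJ cs J j hj * sJ cs J j hj = 1 from
      Subtype.ext (cs.simple_mul_simple_self j), map_one]
  refine ⟨j, hj, ?_, hlen.symm⟩
  rw [← mul_assoc, ← mul_assoc, map_sq, one_mul, cs.simple_mul_simple_cancel_right]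

theorem ShiftEquiv.symm (h : ShiftEquiv φ v v') : ShiftEquiv φ v' v :=
  have : Std.Symm (TwistedShift φ) := ⟨fun _ _ => TwistedShift.symm⟩
  symm_of (Relation.ReflTransGen (TwistedShift φ)) h

theorem ShiftEquiv.trans (h : ShiftEquiv φ v v') (h' : ShiftEquiv φ v' v'') : ShiftEquiv φ v v'' :=
  Relation.ReflTransGen.trans h h'

theorem ShiftEquiv.length_eq (h : ShiftEquiv φ v v') : cs.length v' = cs.length v := by
  induction h with
  | refl => rfl
  | tail _ hstep ih =>
    obtain ⟨_, _, _, hlen⟩ := hstep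
    exact hlen.trans ih

theorem ShiftEquiv.mem_minTwistedOrbit (h : ShiftEquiv φ v v') (hv : v ∈ minTwistedOrbit φ w) :
    v' ∈ minTwistedOrbit φ w := by
  refine mem_minTwistedOrbit_of_length_le hv ?_ h.length_eq.le
  induction h with
  | refl => exact hv.1
  | tail _ hstep ih => exact hstep.mem_twistedOrbit ih

namespace CarriesSimples

theorem map_wordProd (hf : CarriesSimples φ f) {ω : List B} (hω : ∀ i ∈ ω, i ∈ J) :
    φ ⟨cs.wordProd ω, wordProd_mem_parab hω⟩ = cs.wordProd (ω.map f) := by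
  induction ω with
  | nil => exact map_one φ
  | cons i ω ih =>
    have hω' : ∀ j ∈ ω, j ∈ J := fun j hj => hω j (List.mem_cons_of_mem i hj)
    have split : (⟨cs.wordProd (i :: ω), wordProd_mem_parab hω⟩ : parab cs J) =
        sJ cs J i (hω i List.mem_cons_self) * ⟨cs.wordProd ω, wordProd_mem_parab hω'⟩ :=
      Subtype.ext (cs.wordProd_cons i ω)
    rw [split, map_mul, hf, ih hω', List.map_cons, cs.wordProd_cons]

theorem length_map_le (hf : CarriesSimples φ f) (u : parab cs J) :
    cs.length (φ u) ≤ cs.length (u : W) := by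
  obtain ⟨_, hu⟩ := u
  obtain ⟨ω, hω, hred, rfl⟩ := exists_isReduced_of_mem_parab hu
  simpa only [hf.map_wordProd hω, hred.eq, List.length_map] using
    cs.length_wordProd_le (ω.map f)

theorem length_le_of_mem_twistedOrbit (hf : CarriesSimples φ f) (hw : IsMinRep cs J w)
    (hv : v ∈ twistedOrbit φ w) : cs.length w ≤ cs.length v := by
  obtain ⟨u, rfl⟩ := hv
  have length_coset := hw.length_mul (inv_mem u.2)
  rw [cs.length_inv] at length_coset
  have length_ge := cs.length_le_length_mul_add_left (φ u) (w * (u : W)⁻¹)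
  have length_map := hf.length_map_le u
  rw [mul_assoc]
  omega

/-- The letters of `q` are moved to the front one at a time, the last one first. No move increases
the length beyond that of `a π(p ++ q)`, which is already minimal in its orbit. -/
theorem shiftEquiv_wordProd_append (hf : CarriesSimples φ f) {a : W} {p q : List B}
    (hq : ∀ k ∈ q, k ∈ J) (hmin : a * cs.wordProd (p ++ q) ∈ minTwistedOrbit φ w)
    (hlen : cs.length (a * cs.wordProd (p ++ q)) = cs.length a + (p ++ q).length) :
    ShiftEquiv φ (a * cs.wordProd (p ++ q)) (cs.wordProd (q.map f) * a * cs.wordProd p) := by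
  induction q generalizing p with
  | nil =>
    rw [List.append_nil, List.map_nil, cs.wordProd_nil, one_mul]
    exact .refl
  | cons k q ih =>
    have hk : k ∈ J := hq k List.mem_cons_self
    rw [List.append_cons] at hmin hlen ⊢
    have earlier := ih (fun i hi => hq i (List.mem_cons_of_mem k hi)) hmin hlen
    have moved : cs.wordProd ((k :: q).map f) * a * cs.wordProd p = φ (sJ cs J k hk) *
        (cs.wordProd (q.map f) * a * cs.wordProd (p ++ [k])) * cs.simple k := by
      simp only [hf k hk, List.map_cons, cs.wordProd_cons, cs.wordProd_append,
        cs.wordProd_nil, mul_assoc, cs.simple_mul_simple_self, mul_one]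
    have moved_mem : cs.wordProd ((k :: q).map f) * a * cs.wordProd p ∈ twistedOrbit φ w := by
      rw [moved]
      simpa only [sJ, cs.inv_simple] using
        mul_mul_inv_mem_twistedOrbit (earlier.mem_minTwistedOrbit hmin).1 (sJ cs J k hk)
    refine earlier.tail ⟨k, hk, moved, (le_antisymm ?_ (hmin.2 _ moved_mem)).trans
      earlier.length_eq.symm⟩
    calc cs.length (cs.wordProd ((k :: q).map f) * a * cs.wordProd p)
        ≤ ((k :: q).map f).length + cs.length a + p.length :=
          (cs.length_mul_le _ _).trans (add_le_add ((cs.length_mul_le _ _).trans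
            (Nat.add_le_add_right (cs.length_wordProd_le _) _)) (cs.length_wordProd_le p))
      _ = cs.length (a * cs.wordProd (p ++ [k] ++ q)) := by
          simp only [hlen, List.length_map, List.length_append, List.length_cons, List.length_nil]
          omega

theorem shiftEquiv_mul_wordProd (hf : CarriesSimples φ f) {a : W} (ha : IsMinRep cs J a)
    {ω : List B} (hω : ∀ i ∈ ω, i ∈ J) (hred : cs.IsReduced ω)
    (hmin : a * cs.wordProd ω ∈ minTwistedOrbit φ w) :
    ShiftEquiv φ (a * cs.wordProd ω) (cs.wordProd (ω.map f) * a) := by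
  have hlen : cs.length (a * cs.wordProd ω) = cs.length a + ω.length := by
    rw [ha.length_mul (wordProd_mem_parab hω), hred.eq]
  simpa using hf.shiftEquiv_wordProd_append (p := []) hω hmin hlen

end CarriesSimples

/-- For each `k ∈ K`, `a⁻¹ s_{f k} a` is a simple reflection indexed by `K`. For `f` induced by `δ`
and `K ⊆ J` finite this says that `K` is `a`-special. -/
def TwistInvariant (cs : CoxeterSystem M W) (f : B → B) (a : W) (K : Set B) : Prop :=
  ∀ k ∈ K, ∃ l ∈ K, cs.simple (f k) * a = a * cs.simple l

theorem parab_mono {K : Set B} (hKJ : K ⊆ J) : parab cs K ≤ parab cs J :=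
  Subgroup.closure_mono (Set.image_mono hKJ)

theorem TwistInvariant.exists_map_mul_eq {a : W} {K : Set B} (hK : TwistInvariant cs f a K)
    (hf : CarriesSimples φ f) (hKJ : K ⊆ J) {u : W} (hu : u ∈ parab cs K) :
    ∃ z ∈ parab cs K, φ ⟨u, parab_mono hKJ hu⟩ * a = a * z := by
  obtain ⟨ω, hω, rfl⟩ := exists_wordProd_eq_of_mem_parab hu
  rw [hf.map_wordProd fun i hi => hKJ (hω i hi)]
  clear hu
  induction ω with
  | nil => exact ⟨1, one_mem _, by simp⟩
  | cons k ω ih =>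
    obtain ⟨z, hz, hωz⟩ := ih fun i hi => hω i (List.mem_cons_of_mem k hi)
    obtain ⟨l, hl, hkl⟩ := hK k (hω k List.mem_cons_self)
    refine ⟨cs.simple l * z, mul_mem (sJ cs K l hl).2 hz, ?_⟩
    rw [List.map_cons, cs.wordProd_cons, mul_assoc, hωz, ← mul_assoc, hkl, mul_assoc]

namespace CarriesSimples

theorem eq_of_mul_eq_map_mul_mul_inv (hf : CarriesSimples φ f) {a : W} {K : Set B} (hKJ : K ⊆ J)
    (ha : IsMinRep cs J a) (hw : IsMinRep cs J w) (hx : x ∈ parab cs K) {u : parab cs J}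
    (hu : IsMinRep cs K (u : W)⁻¹) (h : a * x = φ u * w * (u : W)⁻¹) : a = w := by
  have h' : φ u * w = a * (x * u) := by rw [← mul_assoc, h, inv_mul_cancel_right]
  have hxu : x * u ∈ parab cs J := mul_mem (parab_mono hKJ hx) u.2
  have length_xu : cs.length (x * u) = cs.length x + cs.length (u : W) := by
    have := hu.length_mul (inv_mem hx)
    rw [← mul_inv_rev] at this
    simpa only [cs.length_inv, add_comm] using this
  have length_w_le := hf.length_le_of_mem_twistedOrbit hw ⟨u, h⟩
  rw [ha.length_mul (parab_mono hKJ hx)] at length_w_le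
  have length_map_mul : cs.length (φ u * w) = cs.length (u : W) + cs.length w := by
    have upper := cs.length_mul_le (φ u) w
    have upper_map := hf.length_map_le u
    rw [h', ha.length_mul hxu, length_xu] at upper ⊢
    omega
  obtain ⟨_, hmem⟩ := u
  obtain ⟨ω, hω, hred, rfl⟩ := exists_isReduced_of_mem_parab hmem
  rw [hf.map_wordProd hω] at h' length_map_mul
  rw [hred.eq, ← List.length_map (f := f)] at length_map_mul
  obtain ⟨ω', hcross, hω'⟩ | ⟨b, hb, hwb, z, hz, hprod⟩ := hw.forall₂_or_exists_length_lt
    length_map_mul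
  · rw [wordProd_mul_eq_mul_wordProd hcross] at h'
    exact (hw.eq_of_mul_eq_mul ha (wordProd_mem_parab hω') hxu h').symm
  · have hba := hb.eq_of_mul_eq_mul ha hz hxu (hprod.symm.trans h')
    subst hba
    rw [h', ha.length_mul hxu, length_xu, List.length_map, hred.eq] at length_map_mul
    omega

theorem eq_of_mul_mem_twistedOrbit (hf : CarriesSimples φ f) {a : W} {K : Set B} (hKJ : K ⊆ J)
    (hK : TwistInvariant cs f a K) (ha : IsMinRep cs J a) (hw : IsMinRep cs J w)
    (hx : x ∈ parab cs K) (hax : a * x ∈ twistedOrbit φ w) : a = w := by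
  obtain ⟨u, hu⟩ := hax
  obtain ⟨b, hb, y, hy, huby⟩ := exists_isMinRep_mul cs K (u : W)⁻¹
  obtain ⟨z, hz, hyz⟩ := hK.exists_map_mul_eq hf hKJ hy
  have coe_inv : ((⟨y, parab_mono hKJ hy⟩ * u : parab cs J) : W)⁻¹ = b := by
    rw [Subgroup.coe_mul, mul_inv_rev, huby, mul_inv_cancel_right]
  refine hf.eq_of_mul_eq_map_mul_mul_inv hKJ ha hw (mul_mem (mul_mem hz hx) (inv_mem hy))
    (u := ⟨y, parab_mono hKJ hy⟩ * u) (coe_inv ▸ hb) ?_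
  calc a * (z * x * y⁻¹) = φ ⟨y, parab_mono hKJ hy⟩ * (a * x) * y⁻¹ := by
        simp only [← mul_assoc, hyz]
    _ = φ (⟨y, parab_mono hKJ hy⟩ * u) * w * (⟨y, parab_mono hKJ hy⟩ * u : parab cs J)⁻¹ := by
        rw [hu, map_mul, Subgroup.coe_inv, Subgroup.coe_mul, mul_inv_rev]
        simp only [mul_assoc]

theorem exists_forall₂_of_minimal (hf : CarriesSimples φ f) {a : W} (ha : IsMinRep cs J a)
    {ω : List B} (hω : ∀ i ∈ ω, i ∈ J) (hred : cs.IsReduced ω)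
    (hmin : a * cs.wordProd ω ∈ minTwistedOrbit φ w)
    (hbest : ∀ b y, IsMinRep cs J b → y ∈ parab cs J → ShiftEquiv φ (a * cs.wordProd ω) (b * y) →
      ω.length ≤ cs.length y) :
    ∃ ω', List.Forall₂ (fun k l => cs.simple (f k) * a = a * cs.simple l) ω ω' ∧
      (∀ i ∈ ω', i ∈ J) ∧ cs.IsReduced ω' ∧
        ShiftEquiv φ (a * cs.wordProd ω) (a * cs.wordProd ω') := by
  have shifted := hf.shiftEquiv_mul_wordProd ha hω hred hmin
  have length_shifted := shifted.length_eq
  rw [ha.length_mul (wordProd_mem_parab hω), hred.eq, add_comm] at length_shifted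
  obtain ⟨ω', hcross, hω'⟩ | ⟨b, hb, hab, z, hz, hprod⟩ := ha.forall₂_or_exists_length_lt
    (by rwa [List.length_map])
  · rw [wordProd_mul_eq_mul_wordProd hcross] at shifted length_shifted
    rw [List.forall₂_map_left_iff] at hcross
    rw [ha.length_mul (wordProd_mem_parab hω')] at length_shifted
    have length_eq := hcross.length_eq
    exact ⟨ω', hcross, hω', by rw [CoxeterSystem.IsReduced]; omega, shifted⟩
  · rw [hprod] at shifted length_shifted
    have := hbest b z hb hz shifted
    rw [hb.length_mul hz] at length_shifted
    omega

/-- Take for `K` the union of the supports of all reduced words `ω` in `J` with `a π(ω)` linked to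
`a x`. -/
theorem exists_twistInvariant_of_minimal (hf : CarriesSimples φ f) {a : W}
    (ha : IsMinRep cs J a) (hx : x ∈ parab cs J) (hmin : a * x ∈ minTwistedOrbit φ w)
    (hbest : ∀ b y, IsMinRep cs J b → y ∈ parab cs J → ShiftEquiv φ (a * x) (b * y) →
      cs.length x ≤ cs.length y) :
    ∃ K ⊆ J, TwistInvariant cs f a K ∧ x ∈ parab cs K := by
  let Linked (ω : List B) : Prop :=
    (∀ i ∈ ω, i ∈ J) ∧ cs.IsReduced ω ∧ ShiftEquiv φ (a * x) (a * cs.wordProd ω)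
  refine ⟨{k | ∃ ω, Linked ω ∧ k ∈ ω}, ?_, ?_, ?_⟩
  · rintro k ⟨ω, hω, hk⟩
    exact hω.1 k hk
  · rintro k ⟨ω, ⟨hω, hred, hlink⟩, hk⟩
    have length_ω : ω.length = cs.length x := by
      have := hlink.length_eq
      rw [ha.length_mul hx, ha.length_mul (wordProd_mem_parab hω), hred.eq] at this
      omega
    obtain ⟨ω', hcross, hω', hred', hlink'⟩ := hf.exists_forall₂_of_minimal ha hω hred
      (hlink.mem_minTwistedOrbit hmin)
      (fun b y hb hy h => length_ω.trans_le (hbest b y hb hy (hlink.trans h)))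
    obtain ⟨n, hn, rfl⟩ := List.mem_iff_getElem.1 hk
    have hn' : n < ω'.length := hcross.length_eq ▸ hn
    exact ⟨ω'[n], ⟨ω', ⟨hω', hred', hlink.trans hlink'⟩, List.getElem_mem hn'⟩, hcross.get hn hn'⟩
  · obtain ⟨ω, hω, hred, rfl⟩ := exists_isReduced_of_mem_parab hx
    exact wordProd_mem_parab fun k hk => ⟨ω, ⟨hω, hred, .refl⟩, hk⟩

theorem shiftEquiv_of_mem_minTwistedOrbit (hf : CarriesSimples φ f) (hw : IsMinRep cs J w)
    (hv : v ∈ minTwistedOrbit φ w) : ShiftEquiv φ v w := by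
  obtain ⟨a₀, ha₀, x₀, hx₀, hvax₀⟩ := exists_isMinRep_mul cs J v
  obtain ⟨⟨a, x⟩, ⟨ha, hx, hvax⟩, hbest⟩ := (measure fun p : W × W => cs.length p.2).wf.has_min
    {p : W × W | IsMinRep cs J p.1 ∧ p.2 ∈ parab cs J ∧ ShiftEquiv φ v (p.1 * p.2)}
    ⟨(a₀, x₀), ha₀, hx₀, hvax₀ ▸ .refl⟩
  dsimp only at ha hx hvax
  have hmin := hvax.mem_minTwistedOrbit hv
  obtain ⟨K, hKJ, hK, hxK⟩ := hf.exists_twistInvariant_of_minimal ha hx hmin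
    fun b y hb hy h => not_lt.1 (hbest (b, y) ⟨hb, hy, hvax.trans h⟩)
  obtain rfl := hf.eq_of_mul_mem_twistedOrbit hKJ hK ha hw hxK hmin.1
  have length_le := hmin.2 a (self_mem_twistedOrbit a)
  rw [ha.length_mul hx] at length_le
  obtain rfl : x = 1 := cs.length_eq_zero_iff.1 (by omega)
  rwa [mul_one] at hvax

theorem exists_bruhatLE_of_twistedShift (hf : CarriesSimples φ f) {z z' : W}
    (hshift : TwistedShift φ z z') (h : ∃ v ∈ minTwistedOrbit φ w, bruhatLE cs v z) :
    ∃ v ∈ minTwistedOrbit φ w, bruhatLE cs v z' := by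
  obtain ⟨v, hv, hvz⟩ := h
  obtain ⟨j, hj, rfl, hlen⟩ := hshift
  have moved_mem := mul_mul_inv_mem_twistedOrbit hv.1 (sJ cs J j hj)
  rw [show ((sJ cs J j hj : W))⁻¹ = cs.simple j from cs.inv_simple j, hf] at moved_mem
  rw [hf] at hlen ⊢
  obtain hle | ⟨hle, hlen_le⟩ := hvz.simple_mul_mul_simple hlen
  · exact ⟨v, hv, hle⟩
  · exact ⟨_, mem_minTwistedOrbit_of_length_le hv moved_mem hlen_le, hle⟩

theorem exists_bruhatLE_of_shiftEquiv (hf : CarriesSimples φ f) {z z' : W}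
    (hshift : ShiftEquiv φ z z') (h : ∃ v ∈ minTwistedOrbit φ w, bruhatLE cs v z) :
    ∃ v ∈ minTwistedOrbit φ w, bruhatLE cs v z' := by
  induction hshift with
  | refl => exact h
  | tail _ hstep ih => exact hf.exists_bruhatLE_of_twistedShift hstep ih

end CarriesSimples

theorem exists_carriesSimples (hφ : ∀ j, ∀ hj : j ∈ J, ∃ i, φ (sJ cs J j hj) = cs.simple i) :
    ∃ f : B → B, CarriesSimples φ f := by
  have extended : ∀ j, ∃ i, ∀ hj : j ∈ J, φ (sJ cs J j hj) = cs.simple i := fun j => by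
    by_cases hj : j ∈ J
    · exact (hφ j hj).imp fun _ hi _ => hi
    · exact ⟨j, fun hj' => absurd hj' hj⟩
  exact Classical.axiomOfChoice extended

theorem stmt9_general {φ : parab cs J →* W}
    (hφ : ∀ j, ∀ hj : j ∈ J, ∃ i, φ (sJ cs J j hj) = cs.simple i) {w w' : W}
    (hw' : IsMinRep cs J w')
    (h : ∃ v' ∈ minTwistedOrbit φ w', ∃ v ∈ minTwistedOrbit φ w, bruhatLE cs v v') :
    ∀ v' ∈ minTwistedOrbit φ w', ∃ v ∈ minTwistedOrbit φ w, bruhatLE cs v v' := by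
  obtain ⟨f, hf⟩ := exists_carriesSimples hφ
  obtain ⟨z, hz, v, hv, hvz⟩ := h
  intro v' hv'
  have z_equiv_v' : ShiftEquiv φ z v' :=
    (hf.shiftEquiv_of_mem_minTwistedOrbit hw' hz).trans
      (hf.shiftEquiv_of_mem_minTwistedOrbit hw' hv').symm
  exact hf.exists_bruhatLE_of_shiftEquiv z_equiv_v' ⟨v, hv, hvz⟩

theorem orbMin_eq_minTwistedOrbit (J' : Set B) (δ : parab cs J ≃* parab cs J') (x : W) :
    orbMin cs J J' δ x = minTwistedOrbit ((parab cs J').subtype.comp δ.toMonoidHom) x := by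
  have orbit_eq : orbitOf cs J J' δ x =
      twistedOrbit ((parab cs J').subtype.comp δ.toMonoidHom) x := by
    ext y
    simp [orbitOf, orbSet, twistedOrbit]
  rw [orbMin, minTwistedOrbit, orbit_eq]

end Generalization

/-- For `w, w' ∈ W^J`: if some `v' ∈ (W_J ·_δ w')_min`
dominates some `v ∈ (W_J ·_δ w)_min` in the Bruhat order, then every
`v' ∈ (W_J ·_δ w')_min` dominates some `v ∈ (W_J ·_δ w)_min`. -/
theorem stmt9 (hδ : MapsSimples cs J J' δ) (w w' : W)
    (hw : IsMinRep cs J w) (hw' : IsMinRep cs J w')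
    (h : ∃ v' ∈ orbMin cs J J' δ w', ∃ v ∈ orbMin cs J J' δ w,
      bruhatLE cs v v') :
    ∀ v' ∈ orbMin cs J J' δ w', ∃ v ∈ orbMin cs J J' δ w,
      bruhatLE cs v v' := by
  simp only [orbMin_eq_minTwistedOrbit] at h ⊢
  exact stmt9_general (fun j hj => (hδ.1 j hj).imp fun _ hi => hi.2) hw' h

end PartialConjugation
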